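/- (Bailey–Daum q-Kummer summation) Let q, a, b be complex numbers with |q| < 1, |q/b| < 1, b ≠ 0, and all denominator factors nonzero. Then ∑_{n=0}^∞ ((a;q)_n (b;q)_n / ((q;q)_n (aq/b;q)_n)) (-q/b)^n = (-q;q)_∞ (aq;q²)_∞ (aq²/b²;q²)_∞ / ((aq/b;q)_∞ (-q/b;q)_∞). -/

import Mathlib

/-- The finite q-shifted factorial `(a;q)_n = ∏_{k=0}^{n-1} (1 - a q^k)`. -/
noncomputable def qPoch (a q : ℂ) (n : ℕ) : ℂ := ∏ k ∈ Finset.range n, (1 - a * q ^ k)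

/-- The infinite q-shifted factorial `(a;q)_∞ = ∏_{k=0}^∞ (1 - a q^k)`. -/
noncomputable def qPochInf (a q : ℂ) : ℂ := ∏' k : ℕ, (1 - a * q ^ k)

/-!
Put `y = q / b` and `Φ(a) = ₂φ₁(a, b; a y; q, -y)`. A telescoping sum gives the contiguous relation
`(1 - a y) (1 - a y q) Φ(a) = (1 - a q) (1 - a y²) Φ(a q²)`. Iterating it moves the first parameter
along `a, a q², a q⁴, … → 0`, and the factors collected on the way are the infinite products in
base `q²`. In the limit only `₂φ₁(0, b; 0; q, -y) = ∑ (b; q)_n / (q; q)_n (-y)^n` is left, which the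
`q`-binomial theorem evaluates. That theorem is proved by the same scheme, now moving the argument
along `z, z q, z q², … → 0`. Unlike Heine's transformation, this route needs no restriction
`‖b‖ < 1` and hence no analytic continuation.
-/

open Filter Finset Topology

theorem mul_eq_mul_of_mul_eq_mul_succ {M : Type*} [CommMonoid M] [TopologicalSpace M]
    [ContinuousMul M] [T2Space M] {u v s : ℕ → M} {U V L : M}
    (h : ∀ N, u N * s N = v N * s (N + 1))
    (hu : Tendsto (fun N ↦ ∏ k ∈ range N, u k) atTop (𝓝 U))
    (hv : Tendsto (fun N ↦ ∏ k ∈ range N, v k) atTop (𝓝 V))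
    (hs : Tendsto s atTop (𝓝 L)) : U * s 0 = V * L := by
  have iterate (N : ℕ) : (∏ k ∈ range N, u k) * s 0 = (∏ k ∈ range N, v k) * s N := by
    induction N with
    | zero => simp
    | succ N ih =>
      rw [prod_range_succ, prod_range_succ, mul_right_comm, ih, mul_assoc, mul_comm (s N), h,
        mul_assoc]
  exact tendsto_nhds_unique ((hu.mul_const (s 0)).congr iterate) (hv.mul hs)

section GeometricProgression

theorem mul_pow_mul_pow_ne_one {M : Type*} [Monoid M] {a q : M}
    (ha : ∀ m : ℕ, a * q ^ m ≠ 1) (k m : ℕ) : a * q ^ k * q ^ m ≠ 1 := by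
  rw [mul_assoc, ← pow_add]
  exact ha (k + m)

variable {𝕜 : Type*} [NormedField 𝕜] {a q : 𝕜}

theorem norm_mul_pow_le (a : 𝕜) (hq : ‖q‖ ≤ 1) (n : ℕ) : ‖a * q ^ n‖ ≤ ‖a‖ := by
  rw [norm_mul, norm_pow]
  exact mul_le_of_le_one_right (norm_nonneg a) (pow_le_one₀ (norm_nonneg q) hq)

theorem tendsto_mul_pow_zero (a : 𝕜) (hq : ‖q‖ < 1) :
    Tendsto (fun n : ℕ ↦ a * q ^ n) atTop (𝓝 0) := by
  simpa only [mul_zero] using (tendsto_pow_atTop_nhds_zero_of_norm_lt_one hq).const_mul a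

theorem mul_pow_ne_one (hq : ‖q‖ < 1) (ha : ‖a‖ < 1) (n : ℕ) : a * q ^ n ≠ 1 :=
  ne_of_apply_ne norm (norm_one (α := 𝕜) ▸ ((norm_mul_pow_le a hq.le n).trans_lt ha).ne)

theorem summable_norm_neg_mul_pow (a : 𝕜) (hq : ‖q‖ < 1) :
    Summable fun k : ℕ ↦ ‖-(a * q ^ k)‖ := by
  simp only [norm_neg, norm_mul, norm_pow]
  exact (summable_geometric_of_lt_one (norm_nonneg q) hq).mul_left _

theorem norm_sq_lt_one (hq : ‖q‖ < 1) : ‖q ^ 2‖ < 1 := by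
  rw [norm_pow]
  exact pow_lt_one₀ (norm_nonneg q) hq two_ne_zero

end GeometricProgression

section QPochhammer

variable {a c q : ℂ}

@[simp]
theorem qPoch_zero (a q : ℂ) : qPoch a q 0 = 1 := prod_range_zero _

@[simp]
theorem qPoch_zero_left (q : ℂ) (n : ℕ) : qPoch 0 q n = 1 := by simp [qPoch]

theorem qPoch_succ (a q : ℂ) (n : ℕ) : qPoch a q (n + 1) = qPoch a q n * (1 - a * q ^ n) :=
  prod_range_succ _ n

theorem qPoch_add (a q : ℂ) (m n : ℕ) :
    qPoch a q (m + n) = qPoch a q m * qPoch (a * q ^ m) q n := by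
  simp only [qPoch, prod_range_add, pow_add, mul_assoc]

theorem qPoch_succ' (a q : ℂ) (n : ℕ) : qPoch a q (n + 1) = (1 - a) * qPoch (a * q) q n := by
  simp [add_comm n, qPoch_add, qPoch_succ]

theorem qPoch_ne_zero (ha : ∀ m : ℕ, a * q ^ m ≠ 1) (n : ℕ) : qPoch a q n ≠ 0 :=
  prod_ne_zero_iff.mpr fun k _ ↦ sub_ne_zero.mpr (ha k).symm

theorem continuous_qPoch (q : ℂ) (n : ℕ) : Continuous fun a ↦ qPoch a q n := by
  unfold qPoch
  fun_prop

theorem norm_qPoch_le (hq : ‖q‖ < 1) (n : ℕ) :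
    ‖qPoch a q n‖ ≤ Real.exp (‖a‖ * (1 - ‖q‖)⁻¹) := by
  have sum_le : ∑ k ∈ range n, ‖-(a * q ^ k)‖ ≤ ‖a‖ * (1 - ‖q‖)⁻¹ := by
    simp only [norm_neg, norm_mul, norm_pow, ← mul_sum]
    gcongr
    exact (summable_geometric_of_lt_one (norm_nonneg q) hq).sum_le_tsum _
      (fun _ _ ↦ by positivity) |>.trans_eq (tsum_geometric_of_lt_one (norm_nonneg q) hq)
  have norm_sub_one_le := (range n).norm_prod_one_add_sub_one_le fun k ↦ -(a * q ^ k)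
  simp only [← sub_eq_add_neg] at norm_sub_one_le
  calc ‖qPoch a q n‖ ≤ ‖qPoch a q n - 1‖ + ‖(1 : ℂ)‖ := norm_le_norm_sub_add _ _
    _ ≤ Real.exp (∑ k ∈ range n, ‖-(a * q ^ k)‖) := by
      rw [norm_one]
      exact le_sub_iff_add_le.mp norm_sub_one_le
    _ ≤ Real.exp (‖a‖ * (1 - ‖q‖)⁻¹) := Real.exp_le_exp.mpr sum_le

theorem multipliable_one_sub_mul_pow (a : ℂ) (hq : ‖q‖ < 1) :
    Multipliable fun k : ℕ ↦ 1 - a * q ^ k := by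
  simpa only [sub_eq_add_neg] using
    multipliable_one_add_of_summable (summable_norm_neg_mul_pow a hq)

theorem tendsto_qPoch (a : ℂ) (hq : ‖q‖ < 1) :
    Tendsto (qPoch a q) atTop (𝓝 (qPochInf a q)) :=
  (multipliable_one_sub_mul_pow a hq).hasProd.tendsto_prod_nat

theorem qPochInf_ne_zero (hq : ‖q‖ < 1) (ha : ∀ m : ℕ, a * q ^ m ≠ 1) : qPochInf a q ≠ 0 := by
  simpa only [qPochInf, sub_eq_add_neg] using
    tprod_one_add_ne_zero_of_summable (f := fun k : ℕ ↦ -(a * q ^ k))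
      (fun k ↦ by simpa only [← sub_eq_add_neg] using sub_ne_zero.mpr (ha k).symm)
      (summable_norm_neg_mul_pow a hq)

theorem qPochInf_eq_mul_sq (a : ℂ) (hq : ‖q‖ < 1) :
    qPochInf a q = qPochInf a (q ^ 2) * qPochInf (a * q) (q ^ 2) := by
  have even (k : ℕ) : 1 - a * q ^ (2 * k) = 1 - a * (q ^ 2) ^ k := by rw [pow_mul]
  have odd (k : ℕ) : 1 - a * q ^ (2 * k + 1) = 1 - a * q * (q ^ 2) ^ k := by ring
  have hq2 := norm_sq_lt_one hq
  have := tprod_even_mul_odd (f := fun k : ℕ ↦ 1 - a * q ^ k)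
    (by simpa only [even] using multipliable_one_sub_mul_pow a hq2)
    (by simpa only [odd] using multipliable_one_sub_mul_pow (a * q) hq2)
  simpa only [qPochInf, even, odd] using this.symm

theorem exists_norm_qPoch_div_qPoch_le (a : ℂ) (hq : ‖q‖ < 1) (hc : ∀ m : ℕ, c * q ^ m ≠ 1) :
    ∃ C, ∀ M n : ℕ, ‖qPoch (a * q ^ M) q n / qPoch (c * q ^ M) q n‖ ≤ C := by
  obtain ⟨D, hD⟩ :=
    ((tendsto_qPoch c hq).inv₀ (qPochInf_ne_zero hq hc)).norm.bddAbove_range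
  have norm_inv_le (n : ℕ) : ‖(qPoch c q n)⁻¹‖ ≤ D := hD ⟨n, rfl⟩
  refine ⟨Real.exp (‖a‖ * (1 - ‖q‖)⁻¹) * Real.exp (‖c‖ * (1 - ‖q‖)⁻¹) * D, fun M n ↦ ?_⟩
  have norm_shift_le := norm_mul_pow_le a hq.le M
  have inv_shift : (qPoch (c * q ^ M) q n)⁻¹ = qPoch c q M * (qPoch c q (M + n))⁻¹ := by
    rw [qPoch_add, mul_inv, mul_inv_cancel_left₀ (qPoch_ne_zero hc M)]
  rw [div_eq_mul_inv, inv_shift, ← mul_assoc, norm_mul, norm_mul]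
  have : 0 ≤ (1 - ‖q‖)⁻¹ := inv_nonneg.mpr (sub_nonneg.mpr hq.le)
  gcongr
  · exact (norm_qPoch_le hq n).trans (by gcongr)
  · exact norm_qPoch_le hq M
  · exact norm_inv_le (M + n)

end QPochhammer

section HeineSeries

variable {a b c q z : ℂ}

/-- The `n`-th term of Heine's basic hypergeometric series `₂φ₁(a, b; c; q, z)`. It takes junk
values (division by zero) when `(q; q)_n` or `(c; q)_n` vanishes. -/
noncomputable def heineTerm (a b c q z : ℂ) (n : ℕ) : ℂ :=
  qPoch a q n * qPoch b q n / (qPoch q q n * qPoch c q n) * z ^ n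

@[simp]
theorem heineTerm_zero (a b c q z : ℂ) : heineTerm a b c q z 0 = 1 := by simp [heineTerm]

theorem heineTerm_succ (a b c q z : ℂ) (n : ℕ) :
    heineTerm a b c q z (n + 1) =
      (1 - a * q ^ n) * (((1 - b * q ^ n) * z) / ((1 - q ^ (n + 1)) * (1 - c * q ^ n)) *
        heineTerm a b c q z n) := by
  simp only [heineTerm, qPoch_succ, pow_succ', div_eq_mul_inv, mul_inv]
  ring

theorem heineTerm_succ_eq_first (a b c q z : ℂ) (n : ℕ) :
    heineTerm a b c q z (n + 1) =
      (1 - a) * (((1 - b * q ^ n) * z) / ((1 - q ^ (n + 1)) * (1 - c * q ^ n)) *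
        heineTerm (a * q) b c q z n) := by
  simp only [heineTerm, qPoch_succ' a, qPoch_succ, pow_succ', div_eq_mul_inv, mul_inv]
  ring

theorem one_sub_mul_heineTerm_first (a b c q z : ℂ) (n : ℕ) :
    (1 - a) * heineTerm (a * q) b c q z n = (1 - a * q ^ n) * heineTerm a b c q z n := by
  have := (qPoch_succ' a q n).symm.trans (qPoch_succ a q n)
  simp only [heineTerm, div_eq_mul_inv]
  linear_combination qPoch b q n * (qPoch q q n * qPoch c q n)⁻¹ * z ^ n * this

theorem one_sub_mul_heineTerm_third (hc : ∀ m : ℕ, c * q ^ m ≠ 1) (n : ℕ) :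
    (1 - c) * heineTerm a b c q z n = (1 - c * q ^ n) * heineTerm a b (c * q) q z n := by
  have hcq : qPoch (c * q) q n ≠ 0 :=
    qPoch_ne_zero (by simpa only [pow_one] using mul_pow_mul_pow_ne_one hc 1) n
  have : (1 - c) * (qPoch c q n)⁻¹ = (1 - c * q ^ n) * (qPoch (c * q) q n)⁻¹ := by
    rw [← div_eq_mul_inv, ← div_eq_mul_inv, div_eq_div_iff (qPoch_ne_zero hc n) hcq,
      ← qPoch_succ', qPoch_succ, mul_comm]
  simp only [heineTerm, div_eq_mul_inv, mul_inv]
  linear_combination qPoch a q n * qPoch b q n * (qPoch q q n)⁻¹ * z ^ n * this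

theorem one_sub_mul_one_sub_mul_heineTerm_third (hc : ∀ m : ℕ, c * q ^ m ≠ 1) (n : ℕ) :
    (1 - c) * (1 - c * q) * heineTerm a b c q z n =
      (1 - c * q ^ n) * (1 - c * q ^ (n + 1)) * heineTerm a b (c * q ^ 2) q z n := by
  have once := one_sub_mul_heineTerm_third (a := a) (b := b) (z := z) hc n
  have twice := one_sub_mul_heineTerm_third (a := a) (b := b) (z := z)
    (by simpa only [pow_one] using mul_pow_mul_pow_ne_one hc 1) n
  rw [mul_assoc c q q, ← sq] at twice
  linear_combination (1 - c * q) * once + (1 - c * q ^ n) * twice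

theorem exists_norm_heineTerm_le (a b : ℂ) (hq : ‖q‖ < 1) (hc : ∀ m : ℕ, c * q ^ m ≠ 1) :
    ∃ C, ∀ (M n : ℕ) (z : ℂ), ‖heineTerm (a * q ^ M) b (c * q ^ M) q z n‖ ≤ C * ‖z‖ ^ n := by
  obtain ⟨A, hA⟩ := exists_norm_qPoch_div_qPoch_le a hq hc
  obtain ⟨B, hB⟩ := exists_norm_qPoch_div_qPoch_le b hq (mul_pow_ne_one hq hq)
  refine ⟨B * A, fun M n z ↦ ?_⟩
  have hB₀ : ‖qPoch b q n / qPoch q q n‖ ≤ B := by simpa only [pow_zero, mul_one] using hB 0 n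
  rw [heineTerm, mul_comm (qPoch (a * q ^ M) q n), mul_div_mul_comm, norm_mul, norm_mul, norm_pow]
  gcongr
  · exact (norm_nonneg _).trans hB₀
  · exact hA M n

theorem summable_heineTerm (a b : ℂ) (hq : ‖q‖ < 1) (hz : ‖z‖ < 1)
    (hc : ∀ m : ℕ, c * q ^ m ≠ 1) : Summable (heineTerm a b c q z) := by
  obtain ⟨C, hC⟩ := exists_norm_heineTerm_le a b hq hc
  refine .of_norm_bounded
    ((summable_geometric_of_lt_one (norm_nonneg z) hz).mul_left C) fun n ↦ ?_
  simpa only [pow_zero, mul_one] using hC 0 n z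

theorem tendsto_tsum_heineTerm (a b : ℂ) {w : ℕ → ℂ} (hq : ‖q‖ < 1)
    (hc : ∀ m : ℕ, c * q ^ m ≠ 1) (hw : Tendsto w atTop (𝓝 z)) (hz : ‖z‖ < 1) :
    Tendsto (fun N ↦ ∑' n, heineTerm (a * q ^ N) b (c * q ^ N) q (w N) n) atTop
      (𝓝 (∑' n, heineTerm 0 b 0 q z n)) := by
  obtain ⟨C, hC⟩ := exists_norm_heineTerm_le a b hq hc
  obtain ⟨r, hzr, hr⟩ := exists_between hz
  have qPoch_shift_tendsto (x : ℂ) (n : ℕ) :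
      Tendsto (fun N ↦ qPoch (x * q ^ N) q n) atTop (𝓝 (qPoch 0 q n)) :=
    ((continuous_qPoch q n).tendsto 0).comp (tendsto_mul_pow_zero x hq)
  refine tendsto_tsum_of_dominated_convergence (bound := fun n ↦ ‖C‖ * r ^ n)
    ((summable_geometric_of_lt_one ((norm_nonneg z).trans hzr.le) hr).mul_left _) (fun n ↦ ?_) ?_
  · refine (((qPoch_shift_tendsto a n).mul_const _).div
      ((qPoch_shift_tendsto c n).const_mul _) ?_).mul (hw.pow n)
    simpa only [qPoch_zero_left, mul_one] using qPoch_ne_zero (mul_pow_ne_one hq hq) n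
  · filter_upwards [hw.norm.eventually_lt_const hzr] with N hN n
    refine (hC N n (w N)).trans ?_
    gcongr
    exact Real.le_norm_self C

end HeineSeries

section QBinomial

variable {b q z : ℂ}

theorem sum_range_heineTerm_qBinomial (hq : ∀ m : ℕ, q * q ^ m ≠ 1) (N : ℕ) :
    ∑ n ∈ range N,
        ((1 - z) * heineTerm 0 b 0 q z n - (1 - b * z) * heineTerm 0 b 0 q (z * q) n) =
      -((1 - q ^ N) * heineTerm 0 b 0 q z N) := by
  induction N with
  | zero => simp
  | succ N ih =>
    have hqN : 1 - q ^ (N + 1) ≠ 0 := sub_ne_zero.mpr (pow_succ' q N ▸ hq N).symm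
    have scale : heineTerm 0 b 0 q (z * q) N = q ^ N * heineTerm 0 b 0 q z N := by
      rw [heineTerm, heineTerm, mul_pow]
      ring
    rw [sum_range_succ, ih, scale, heineTerm_succ]
    field_simp
    ring

theorem one_sub_mul_tsum_heineTerm_qBinomial (b : ℂ) (hq : ‖q‖ < 1) (hz : ‖z‖ < 1) :
    (1 - z) * ∑' n, heineTerm 0 b 0 q z n =
      (1 - b * z) * ∑' n, heineTerm 0 b 0 q (z * q) n := by
  have hzq : ‖z * q‖ < 1 := by
    simpa only [pow_one] using (norm_mul_pow_le z hq.le 1).trans_lt hz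
  have hs := summable_heineTerm 0 b hq hz (c := 0) (by simp)
  have hs' := summable_heineTerm 0 b hq hzq (c := 0) (by simp)
  have partial_sums := ((hs.hasSum.mul_left (1 - z)).sub
    (hs'.hasSum.mul_left (1 - b * z))).tendsto_sum_nat
  simp only [sum_range_heineTerm_qBinomial (mul_pow_ne_one hq hq)] at partial_sums
  have remainder : Tendsto (fun N ↦ -((1 - q ^ N) * heineTerm 0 b 0 q z N)) atTop (𝓝 0) := by
    simpa only [mul_zero, neg_zero] using
      (((tendsto_pow_atTop_nhds_zero_of_norm_lt_one hq).const_sub 1).mul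
        hs.tendsto_atTop_zero).neg
  exact sub_eq_zero.mp (tendsto_nhds_unique partial_sums remainder)

theorem tsum_heineTerm_qBinomial (b : ℂ) (hq : ‖q‖ < 1) (hz : ‖z‖ < 1) :
    ∑' n, heineTerm 0 b 0 q z n = qPochInf (b * z) q / qPochInf z q := by
  have hzN (N : ℕ) : ‖z * q ^ N‖ < 1 := (norm_mul_pow_le z hq.le N).trans_lt hz
  have recurrence (N : ℕ) : (1 - z * q ^ N) * ∑' n, heineTerm 0 b 0 q (z * q ^ N) n =
      (1 - b * z * q ^ N) * ∑' n, heineTerm 0 b 0 q (z * q ^ (N + 1)) n := by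
    simpa only [mul_assoc, pow_succ] using one_sub_mul_tsum_heineTerm_qBinomial b hq (hzN N)
  have at_zero : ∑' n, heineTerm 0 b 0 q 0 n = 1 := by
    rw [tsum_eq_single 0 fun n hn ↦ by simp [heineTerm, hn], heineTerm_zero]
  have limit := tendsto_tsum_heineTerm 0 b hq (c := 0) (by simp) (tendsto_mul_pow_zero z hq)
    (by simp)
  simp only [zero_mul, at_zero] at limit
  have := mul_eq_mul_of_mul_eq_mul_succ recurrence (tendsto_qPoch z hq)
    (tendsto_qPoch (b * z) hq) limit
  rw [eq_div_iff (qPochInf_ne_zero hq (mul_pow_ne_one hq hz)), mul_comm]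
  simpa only [pow_zero, mul_one] using this

end QBinomial

section BaileyDaum

variable {a b q y : ℂ}

theorem heineTerm_baileyDaum_telescope (hq : ∀ m : ℕ, q * q ^ m ≠ 1) (hby : b * y = q)
    (hc : ∀ m : ℕ, a * y * q ^ m ≠ 1) (n : ℕ) :
    (1 - a * y) * (1 - a * y * q) * heineTerm a b (a * y) q (-y) (n + 1) -
        (1 - a * q) * (1 - a * y ^ 2) * heineTerm (a * q ^ 2) b (a * y * q ^ 2) q (-y) (n + 1) =
      a * (1 - y) *
        ((q ^ (n + 2) - y) * heineTerm (a * q) b (a * y * q ^ 2) q (-y) (n + 1) -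
          (q ^ (n + 1) - y) * heineTerm (a * q) b (a * y * q ^ 2) q (-y) n) := by
  have hqn : 1 - q ^ (n + 1) ≠ 0 := sub_ne_zero.mpr (pow_succ' q n ▸ hq n).symm
  have hcn : 1 - a * y * q ^ 2 * q ^ n ≠ 0 :=
    sub_ne_zero.mpr (mul_pow_mul_pow_ne_one hc 2 n).symm
  have shift_third :=
    one_sub_mul_one_sub_mul_heineTerm_third (a := a) (b := b) (z := -y) hc (n + 1)
  have shift_first := one_sub_mul_heineTerm_first (a * q) b (a * y * q ^ 2) q (-y) (n + 1)
  rw [mul_assoc a q q, ← sq] at shift_first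
  rw [heineTerm_succ_eq_first a b (a * y * q ^ 2)] at shift_third
  rw [heineTerm_succ (a * q)] at shift_first ⊢
  -- After this step all four terms are polynomial multiples of `r`.
  set k := heineTerm (a * q) b (a * y * q ^ 2) q (-y) n
  set r := (1 - b * q ^ n) * -y / ((1 - q ^ (n + 1)) * (1 - a * y * q ^ 2 * q ^ n)) * k with hr
  have last : (q ^ (n + 1) - y) * k = (1 - q ^ (n + 1)) * (1 - a * y * q ^ 2 * q ^ n) * r := by
    rw [hr, ← mul_assoc, mul_div_cancel₀ _ (mul_ne_zero hqn hcn)]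
    linear_combination -(q ^ n * k) * hby
  linear_combination shift_third - (1 - a * y ^ 2) * shift_first + a * (1 - y) * last

theorem sum_range_heineTerm_baileyDaum (hq : ∀ m : ℕ, q * q ^ m ≠ 1) (hby : b * y = q)
    (hc : ∀ m : ℕ, a * y * q ^ m ≠ 1) (N : ℕ) :
    ∑ n ∈ range (N + 1),
        ((1 - a * y) * (1 - a * y * q) * heineTerm a b (a * y) q (-y) n -
          (1 - a * q) * (1 - a * y ^ 2) * heineTerm (a * q ^ 2) b (a * y * q ^ 2) q (-y) n) =
      a * (1 - y) * ((q ^ (N + 1) - y) * heineTerm (a * q) b (a * y * q ^ 2) q (-y) N) := by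
  induction N with
  | zero =>
    simp only [zero_add, sum_range_one, heineTerm_zero, pow_one]
    ring
  | succ N ih =>
    rw [sum_range_succ, ih, heineTerm_baileyDaum_telescope hq hby hc]
    ring

theorem mul_tsum_heineTerm_baileyDaum (hq : ‖q‖ < 1) (hy : ‖y‖ < 1) (hby : b * y = q)
    (hc : ∀ m : ℕ, a * y * q ^ m ≠ 1) :
    (1 - a * y) * (1 - a * y * q) * ∑' n, heineTerm a b (a * y) q (-y) n =
      (1 - a * q) * (1 - a * y ^ 2) *
        ∑' n, heineTerm (a * q ^ 2) b (a * y * q ^ 2) q (-y) n := by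
  have hy' : ‖-y‖ < 1 := by rwa [norm_neg]
  have hc₂ := mul_pow_mul_pow_ne_one hc 2
  have hs := summable_heineTerm a b hq hy' hc
  have hs' := summable_heineTerm (a * q ^ 2) b hq hy' hc₂
  have partial_sums := ((hs.hasSum.mul_left ((1 - a * y) * (1 - a * y * q))).sub
    (hs'.hasSum.mul_left ((1 - a * q) * (1 - a * y ^ 2)))).tendsto_sum_nat.comp
      (tendsto_add_atTop_nat 1)
  simp only [Function.comp_def,
    sum_range_heineTerm_baileyDaum (mul_pow_ne_one hq hq) hby hc] at partial_sums
  have remainder : Tendsto (fun N ↦ a * (1 - y) *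
      ((q ^ (N + 1) - y) * heineTerm (a * q) b (a * y * q ^ 2) q (-y) N)) atTop (𝓝 0) := by
    have pow_tendsto : Tendsto (fun N ↦ q ^ (N + 1)) atTop (𝓝 0) :=
      (tendsto_pow_atTop_nhds_zero_of_norm_lt_one hq).comp (tendsto_add_atTop_nat 1)
    simpa only [mul_zero] using ((pow_tendsto.sub_const y).mul
      (summable_heineTerm (a * q) b hq hy' hc₂).tendsto_atTop_zero).const_mul (a * (1 - y))
  exact sub_eq_zero.mp (tendsto_nhds_unique partial_sums remainder)

theorem tsum_heineTerm_baileyDaum (hq : ‖q‖ < 1) (hy : ‖y‖ < 1) (hby : b * y = q)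
    (hc : ∀ m : ℕ, a * y * q ^ m ≠ 1) :
    ∑' n, heineTerm a b (a * y) q (-y) n =
      qPochInf (-q) q * qPochInf (a * q) (q ^ 2) * qPochInf (a * y ^ 2) (q ^ 2) /
        (qPochInf (a * y) q * qPochInf (-y) q) := by
  have hy' : ‖-y‖ < 1 := by rwa [norm_neg]
  have hq₂ := norm_sq_lt_one hq
  have recurrence (N : ℕ) :
      (1 - a * y * (q ^ 2) ^ N) * (1 - a * y * q * (q ^ 2) ^ N) *
          ∑' n, heineTerm (a * q ^ (2 * N)) b (a * y * q ^ (2 * N)) q (-y) n =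
        (1 - a * q * (q ^ 2) ^ N) * (1 - a * y ^ 2 * (q ^ 2) ^ N) *
          ∑' n, heineTerm (a * q ^ (2 * (N + 1))) b (a * y * q ^ (2 * (N + 1))) q (-y) n := by
    have := mul_tsum_heineTerm_baileyDaum (a := a * q ^ (2 * N)) hq hy hby fun m ↦ by
      simpa only [mul_right_comm a] using mul_pow_mul_pow_ne_one hc (2 * N) m
    convert this using 3 <;> ring_nf
  have limit := (tendsto_tsum_heineTerm a b hq hc (tendsto_const_nhds (x := -y)) hy').comp
    (tendsto_id.const_mul_atTop' (r := 2) two_pos)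
  have key := mul_eq_mul_of_mul_eq_mul_succ recurrence
    (by simpa only [qPoch, prod_mul_distrib] using
      (tendsto_qPoch (a * y) hq₂).mul (tendsto_qPoch (a * y * q) hq₂))
    (by simpa only [qPoch, prod_mul_distrib] using
      (tendsto_qPoch (a * q) hq₂).mul (tendsto_qPoch (a * y ^ 2) hq₂)) limit
  rw [tsum_heineTerm_qBinomial b hq hy', mul_neg, hby, ← qPochInf_eq_mul_sq (a * y) hq] at key
  simp only [mul_zero, pow_zero, mul_one] at key
  have hne := qPochInf_ne_zero hq hc
  have hne' := qPochInf_ne_zero hq (mul_pow_ne_one hq hy')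
  have cancel := div_mul_cancel₀ (qPochInf (-q) q) hne'
  rw [eq_div_iff (mul_ne_zero hne hne')]
  linear_combination qPochInf (-y) q * key +
    qPochInf (a * q) (q ^ 2) * qPochInf (a * y ^ 2) (q ^ 2) * cancel

end BaileyDaum

/-- The Bailey–Daum q-Kummer summation formula: for `|q| < 1`, `|q/b| < 1`, `b ≠ 0`,
with nonzero denominator factors,
`₂φ₁(a,b;aq/b;q,-q/b) = (-q;q)_∞ (aq;q²)_∞ (aq²/b²;q²)_∞ / ((aq/b;q)_∞ (-q/b;q)_∞)`. -/
theorem bailey_daum (q a b : ℂ) (hq : ‖q‖ < 1) (hqb : ‖q / b‖ < 1) (hb : b ≠ 0)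
    (hden : ∀ m : ℕ, a * q / b * q ^ m ≠ 1) :
    HasSum
      (fun n : ℕ =>
        qPoch a q n * qPoch b q n / (qPoch q q n * qPoch (a * q / b) q n) * (-(q / b)) ^ n)
      (qPochInf (-q) q * qPochInf (a * q) (q ^ 2) * qPochInf (a * q ^ 2 / b ^ 2) (q ^ 2) /
        (qPochInf (a * q / b) q * qPochInf (-(q / b)) q)) := by
  have hby : b * (q / b) = q := mul_div_cancel₀ q hb
  have hsq : a * q ^ 2 / b ^ 2 = a * (q / b) ^ 2 := by rw [div_pow, mul_div_assoc]
  rw [mul_div_assoc a q b] at hden ⊢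
  rw [hsq, ← tsum_heineTerm_baileyDaum hq hqb hby hden]
  exact (summable_heineTerm a b hq (by rwa [norm_neg]) hden).hasSum
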